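/- arXiv:0706.3828 — 5 statements merged into one kernel-verified Lean document; each statement's English description precedes it below -/
import Mathlib

section
/- Let 𝔤 be a finite-dimensional semisimple Lie algebra over ℂ and let x ∈ 𝔤 be a regular element, meaning that the dimension of its centralizer is minimal: dim 𝔤_x ≤ dim 𝔤_y for every y ∈ 𝔤. Then the centralizer 𝔤_x is an abelian Lie subalgebra of 𝔤. -/
/-- If `A` has minimal nullity within the pencil spanned by `A` and `B`, then `B` maps the kernel
of `A` into the range of `A`. -/
theorem LinearMap.apply_mem_range_of_finrank_ker_le {K V W : Type*} [Field K] [Infinite K]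
    [AddCommGroup V] [Module K V] [FiniteDimensional K V] [AddCommGroup W] [Module K W]
    (A B : V →ₗ[K] W)
    (h : ∀ μ : K, Module.finrank K (LinearMap.ker A) ≤
      Module.finrank K (LinearMap.ker (B - μ • A)))
    {v : V} (hv : A v = 0) : B v ∈ LinearMap.range A := by
  by_contra hBv
  obtain ⟨C, hC⟩ := Submodule.exists_isCompl (LinearMap.ker A)
  let T₀ : C × K →ₗ[K] W := (A ∘ₗ C.subtype).coprod (LinearMap.toSpanSingleton K W (B v))
  let T₁ : C × K →ₗ[K] W := B ∘ₗ C.subtype ∘ₗ LinearMap.fst K C K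
  have hT₀ : LinearMap.ker T₀ = ⊥ := by
    rw [LinearMap.ker_eq_bot']
    rintro ⟨c, s⟩ hcs
    replace hcs : A c + s • B v = 0 := hcs
    have hs : s = 0 := by
      by_contra hs
      refine hBv ⟨-(s⁻¹ • (c : V)), ?_⟩
      rw [map_neg, map_smul, eq_neg_of_add_eq_zero_left hcs, smul_neg, neg_neg, inv_smul_smul₀ hs]
    subst hs
    have hc : (c : V) ∈ LinearMap.ker A := by simpa using hcs
    have : (c : V) = 0 := Submodule.disjoint_def.mp hC.disjoint _ hc c.2
    simpa using this
  obtain ⟨G, hG⟩ := T₀.exists_leftInverse_of_injective hT₀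
  obtain ⟨μ, hμ⟩ := (Module.End.finite_hasEigenvalue (G ∘ₗ T₁)).exists_notMem
  let S : V →ₗ[K] W := B - μ • A
  let E : C × K →ₗ[K] V := C.subtype.coprod (LinearMap.toSpanSingleton K V (-(μ • v)))
  have hSE : S ∘ₗ E = T₁ - μ • T₀ := by
    ext <;> simp [S, E, T₀, T₁, hv]
  have hinj : Function.Injective (S ∘ₗ E) := by
    rw [← LinearMap.ker_eq_bot, LinearMap.ker_eq_bot']
    intro p hp
    by_contra hp0
    refine hμ (Module.End.hasEigenvalue_of_hasEigenvector (x := p)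
      (Module.End.hasEigenvector_iff.mpr ⟨Module.End.mem_eigenspace_iff.mpr ?_, hp0⟩))
    rw [hSE, LinearMap.sub_apply, sub_eq_zero, LinearMap.smul_apply] at hp
    rw [LinearMap.comp_apply, hp, map_smul, ← LinearMap.comp_apply, hG, LinearMap.id_apply]
  have hle : Module.finrank K (C × K) ≤ Module.finrank K (LinearMap.range S) :=
    (LinearMap.finrank_range_of_inj hinj).symm.le.trans
      (Submodule.finrank_mono (LinearMap.range_comp_le_range E S))
  have hdim := Submodule.finrank_add_eq_of_isCompl hC
  have hrank := S.finrank_range_add_finrank_ker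
  have hker : Module.finrank K (LinearMap.ker A) ≤ Module.finrank K (LinearMap.ker S) := h μ
  rw [Module.finrank_prod, Module.finrank_self] at hle
  omega

/-- If `x` is a regular element of a finite-dimensional complex semisimple Lie algebra
(i.e. the dimension of its centralizer is minimal), then the centralizer of `x` is abelian. -/
theorem centralizer_of_regular_isAbelian
    (L : Type*) [LieRing L] [LieAlgebra ℂ L] [FiniteDimensional ℂ L]
    [LieAlgebra.IsSemisimple ℂ L] (x : L)
    (hreg : ∀ y : L,
      Module.finrank ℂ (LinearMap.ker (LieAlgebra.ad ℂ L x)) ≤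
        Module.finrank ℂ (LinearMap.ker (LieAlgebra.ad ℂ L y))) :
    ∀ y z : L, ⁅x, y⁆ = 0 → ⁅x, z⁆ = 0 → ⁅y, z⁆ = 0 := by
  intro y z hy hz
  refine (LieAlgebra.IsKilling.killingForm_nondegenerate ℂ L).2 _ fun u => ?_
  obtain ⟨w, hw⟩ : LieAlgebra.ad ℂ L u y ∈ LinearMap.range (LieAlgebra.ad ℂ L x) := by
    refine LinearMap.apply_mem_range_of_finrank_ker_le _ _ (fun μ => ?_) hy
    rw [← map_smul, ← map_sub]
    exact hreg _
  rw [LieAlgebra.ad_apply, LieAlgebra.ad_apply] at hw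
  rw [killingForm, ← LieModule.traceForm_apply_lie_apply, ← hw, ← lie_skew x w, map_neg,
    LinearMap.neg_apply, LieModule.traceForm_apply_lie_apply, hz, map_zero, neg_zero]
end

section
/- Let E = E_1 ⊕ … ⊕ E_m be a finite-dimensional complex vector space, graded by nonzero subspaces with dim E_i = b_i and b_1 ≥ b_2 ≥ … ≥ b_m ≥ 1. Let x be a nilpotent endomorphism of E such that each E_i is x-invariant and the restriction of x to each E_i is cyclic. Let 𝔥_x = {u ∈ End(E) : u∘x = x∘u} be the centralizer of x in the Lie algebra gl(E). Then the codimension of the derived algebra [𝔥_x, 𝔥_x] in 𝔥_x equals b_1, i.e. dim 𝔥_x − dim [𝔥_x, 𝔥_x] = b_1. -/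
/-- An endomorphism `u` of a finite-dimensional complex vector space `V` is *cyclic* if
there is a vector `e` such that `e, u e, u² e, …, u^(dim V − 1) e` is a basis of `V`. -/
def IsCyclicEnd {V : Type*} [AddCommGroup V] [Module ℂ V] (u : Module.End ℂ V) : Prop :=
  ∃ e : V,
    LinearIndependent ℂ (fun k : Fin (Module.finrank ℂ V) => (u ^ (k : ℕ)) e) ∧
    Submodule.span ℂ (Set.range fun k : Fin (Module.finrank ℂ V) => (u ^ (k : ℕ)) e) = ⊤

section

open Polynomial

/-- Generators `gen i` of a decomposition of `V` into `x`-cyclic summands `K[X] / (X ^ b i)`,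
`i < m`, together with linear lifts `coord i` of the coordinates to polynomials. -/
structure CyclicFrame {K V : Type*} [Field K] [AddCommGroup V] [Module K V]
    (x : Module.End K V) (m : ℕ) (b : ℕ → ℕ) where
  /-- The generator of the `i`-th summand; it vanishes for `i ≥ m`. -/
  gen : ℕ → V
  /-- The `i`-th polynomial coordinate, meaningful modulo `X ^ b i`. -/
  coord : ℕ → V →ₗ[K] K[X]
  gen_eq_zero : ∀ i, m ≤ i → gen i = 0
  sum_coord : ∀ v, ∑ i ∈ Finset.range m, aeval x (coord i v) (gen i) = v
  coord_gen : ∀ i j, i < m → j < m → ∀ p : K[X],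
    X ^ b i ∣ coord i (aeval x p (gen j)) - if i = j then p else 0
  pow_gen : ∀ i, (x ^ b i) (gen i) = 0
  eq_zero : ∀ i, m ≤ i → b i = 0

namespace CyclicFrame

variable {K V : Type*} [Field K] [AddCommGroup V] [Module K V]
  {x : Module.End K V} {m : ℕ} {b : ℕ → ℕ} (F : CyclicFrame x m b)

theorem apply_aeval_of_commute {u : Module.End K V} (hu : Commute x u) (p : K[X]) (w : V) :
    u (aeval x p w) = aeval x p (u w) := by
  induction p using Polynomial.induction_on' with
  | add p q hp hq => simp [hp, hq]
  | monomial n a =>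
    have := LinearMap.congr_fun (hu.pow_left n).eq w
    simp only [Module.End.mul_apply] at this
    simp [aeval_monomial, Module.algebraMap_end_apply, this]

theorem dvd_coord_gen (i j : ℕ) (p : K[X]) :
    X ^ b i ∣ F.coord i (aeval x p (F.gen j)) - if i = j then p else 0 := by
  by_cases hi : i < m
  · by_cases hj : j < m
    · exact F.coord_gen i j hi hj p
    · have : i ≠ j := by omega
      simp [F.gen_eq_zero j (by omega), this]
  · simp [F.eq_zero i (by omega)]

theorem aeval_gen_eq_zero {i : ℕ} {p : K[X]} (h : X ^ b i ∣ p) : aeval x p (F.gen i) = 0 := by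
  obtain ⟨q, rfl⟩ := h
  rw [mul_comm]
  simp [F.pow_gen]

theorem aeval_gen_congr {i : ℕ} {p q : K[X]} (h : X ^ b i ∣ p - q) :
    aeval x p (F.gen i) = aeval x q (F.gen i) := by
  have := F.aeval_gen_eq_zero h
  rwa [map_sub, LinearMap.sub_apply, sub_eq_zero] at this

theorem dvd_coord_aeval (i : ℕ) (p : K[X]) (v : V) :
    X ^ b i ∣ F.coord i (aeval x p v) - p * F.coord i v := by
  by_cases hi : i < m
  · have h : aeval x p v = ∑ j ∈ Finset.range m, aeval x (p * F.coord j v) (F.gen j) := by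
      conv_lhs => rw [← F.sum_coord v]
      simp [map_sum]
    have h2 : p * F.coord i v = ∑ j ∈ Finset.range m, if i = j then p * F.coord j v else 0 := by
      simp [hi]
    rw [h, h2, map_sum, ← Finset.sum_sub_distrib]
    exact Finset.dvd_sum fun j _ => F.dvd_coord_gen i j _
  · simp [F.eq_zero i (by omega)]

/-- The map sending `gen j` to `q • gen i` and the other generators to `0`. -/
noncomputable def elem (i j : ℕ) : K[X] →ₗ[K] Module.End K V :=
  LinearMap.mk₂ K (fun q v => aeval x (F.coord j v * q) (F.gen i))
    (by intros; simp [mul_add]) (by intros; simp)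
    (by intros; simp [add_mul]) (by intros; simp)

theorem elem_apply (i j : ℕ) (q : K[X]) (v : V) :
    F.elem i j q v = aeval x (F.coord j v * q) (F.gen i) := rfl

theorem elem_commute {i j : ℕ} {q : K[X]} (h : X ^ b i ∣ X ^ b j * q) :
    Commute x (F.elem i j q) := by
  refine LinearMap.ext fun v => ?_
  have h1 := F.dvd_coord_aeval j X v
  rw [aeval_X] at h1
  have h2 : X ^ b i ∣ F.coord j (x v) * q - X * (F.coord j v * q) := by
    have := h.trans (mul_dvd_mul_right h1 q)
    rwa [sub_mul, mul_assoc] at this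
  rw [Module.End.mul_apply, Module.End.mul_apply, elem_apply, elem_apply, F.aeval_gen_congr h2,
    map_mul (aeval x) X, aeval_X, Module.End.mul_apply]

theorem elem_mul_elem {i j k l : ℕ} {q : K[X]} (r : K[X]) (h : X ^ b i ∣ X ^ b j * q) :
    F.elem i j q * F.elem k l r = if j = k then F.elem i l (r * q) else 0 := by
  refine LinearMap.ext fun v => ?_
  have h1 := h.trans (mul_dvd_mul_right (F.dvd_coord_gen j k (F.coord l v * r)) q)
  rw [sub_mul] at h1
  rw [Module.End.mul_apply, elem_apply, elem_apply, F.aeval_gen_congr h1]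
  split_ifs <;> simp [elem_apply, mul_assoc]

theorem elem_gen (i j : ℕ) (q : K[X]) :
    F.elem i i q (F.gen j) = if i = j then aeval x q (F.gen i) else 0 := by
  have h := F.dvd_coord_gen i j 1
  rw [map_one, Module.End.one_apply] at h
  have h1 := h.trans (Dvd.intro q rfl)
  rw [sub_mul] at h1
  rw [elem_apply, F.aeval_gen_congr h1]
  split_ifs <;> simp

theorem eq_sum_elem {u : Module.End K V} (hu : Commute x u) :
    u = ∑ j ∈ Finset.range m, ∑ i ∈ Finset.range m, F.elem i j (F.coord i (u (F.gen j))) := by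
  refine LinearMap.ext fun v => ?_
  conv_lhs => rw [← F.sum_coord v, map_sum]
  rw [LinearMap.sum_apply]
  refine Finset.sum_congr rfl fun j _ => ?_
  rw [apply_aeval_of_commute hu]
  conv_lhs => rw [← F.sum_coord (u (F.gen j)), map_sum]
  rw [LinearMap.sum_apply]
  refine Finset.sum_congr rfl fun i _ => ?_
  rw [elem_apply, map_mul, Module.End.mul_apply]

theorem dvd_coord_of_commute {u : Module.End K V} (hu : Commute x u) (i j : ℕ) :
    X ^ b i ∣ X ^ b j * F.coord i (u (F.gen j)) := by
  have h := F.dvd_coord_aeval i (X ^ b j) (u (F.gen j))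
  have h0 : aeval x (X ^ b j : K[X]) (u (F.gen j)) = 0 := by
    have := LinearMap.congr_fun (hu.pow_left (b j)).eq (F.gen j)
    simpa [F.pow_gen] using this
  rwa [h0, map_zero, zero_sub, dvd_neg] at h

theorem dvd_coord_mul {u : Module.End K V} (hu : Commute x u) (v : Module.End K V) (i j : ℕ) :
    X ^ b i ∣ F.coord i ((u * v) (F.gen j)) -
      ∑ k ∈ Finset.range m, F.coord k (v (F.gen j)) * F.coord i (u (F.gen k)) := by
  have h : (u * v) (F.gen j) =
      ∑ k ∈ Finset.range m, aeval x (F.coord k (v (F.gen j))) (u (F.gen k)) := by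
    rw [Module.End.mul_apply]
    conv_lhs => rw [← F.sum_coord (v (F.gen j)), map_sum]
    exact Finset.sum_congr rfl fun k _ => apply_aeval_of_commute hu _ _
  rw [h, map_sum, ← Finset.sum_sub_distrib]
  exact Finset.dvd_sum fun k _ => F.dvd_coord_aeval i _ _

/-- The sum of the first `i + 1` diagonal entries of an endomorphism, as a polynomial. -/
noncomputable def partialTrace (i : ℕ) : Module.End K V →ₗ[K] K[X] :=
  ∑ j ∈ Finset.range (i + 1), F.coord j ∘ₗ LinearMap.applyₗ (F.gen j)

theorem partialTrace_apply (i : ℕ) (u : Module.End K V) :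
    F.partialTrace i u = ∑ j ∈ Finset.range (i + 1), F.coord j (u (F.gen j)) := by
  simp [partialTrace]

theorem dvd_partialTrace_mul (hb : Antitone b) {i : ℕ} (hi : i < m) {u v : Module.End K V}
    (hu : Commute x u) :
    X ^ (b i - b (i + 1)) ∣ F.partialTrace i (u * v) -
      ∑ j ∈ Finset.range (i + 1), ∑ k ∈ Finset.range (i + 1),
        F.coord k (v (F.gen j)) * F.coord j (u (F.gen k)) := by
  rw [partialTrace_apply, ← Finset.sum_sub_distrib]
  refine Finset.dvd_sum fun j hj => ?_
  have hji : j ≤ i := by simpa [Nat.lt_succ_iff] using hj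
  have hbj : b i ≤ b j := hb hji
  have h1 := (pow_dvd_pow (X : K[X]) (show b i - b (i + 1) ≤ b j by omega)).trans
    (F.dvd_coord_mul hu v j j)
  rw [← Finset.sum_range_add_sum_Ico _ (show i + 1 ≤ m by omega), ← sub_sub] at h1
  refine (dvd_sub_left (Finset.dvd_sum fun k hk => Dvd.dvd.mul_left ?_ _)).mp h1
  have hbk : b k ≤ b (i + 1) := hb (Finset.mem_Ico.mp hk).1
  have h2 := F.dvd_coord_of_commute hu j k
  rw [show b j = b k + (b j - b k) by have := hb (show i ≤ i + 1 by omega); omega, pow_add,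
    mul_dvd_mul_iff_left (pow_ne_zero _ X_ne_zero)] at h2
  exact (pow_dvd_pow _ (by omega)).trans h2

theorem dvd_partialTrace_commutator (hb : Antitone b) {i : ℕ} (hi : i < m)
    {u v : Module.End K V} (hu : Commute x u) (hv : Commute x v) :
    X ^ (b i - b (i + 1)) ∣ F.partialTrace i (u * v - v * u) := by
  have h := dvd_sub (F.dvd_partialTrace_mul hb hi (v := v) hu)
    (F.dvd_partialTrace_mul hb hi (v := u) hv)
  rw [Finset.sum_comm (s := Finset.range (i + 1))] at h
  simp only [mul_comm] at h
  rw [sub_sub_sub_cancel_right] at h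
  simpa [mul_comm] using h

variable (x) in
/-- The linear span of the commutators of endomorphisms commuting with `x`. -/
def derivedCentralizer : Submodule K (Module.End K V) :=
  Submodule.span K {w | ∃ u v, Commute x u ∧ Commute x v ∧ w = u * v - v * u}

theorem commutator_mem {u v : Module.End K V} (hu : Commute x u) (hv : Commute x v) :
    u * v - v * u ∈ derivedCentralizer x :=
  Submodule.subset_span ⟨u, v, hu, hv, rfl⟩

theorem elem_mem_of_ne {i j : ℕ} (hij : i ≠ j) {q : K[X]} (h : X ^ b i ∣ X ^ b j * q) :
    F.elem i j q ∈ derivedCentralizer x := by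
  have h1 : (X : K[X]) ^ b i ∣ X ^ b i * 1 := by simp
  have := commutator_mem (F.elem_commute h1) (F.elem_commute h)
  rwa [F.elem_mul_elem _ h1, F.elem_mul_elem _ h, if_pos rfl, if_neg hij.symm, mul_one,
    sub_zero] at this

theorem elem_sub_elem_succ_mem (hb : Antitone b) (i : ℕ) {q : K[X]}
    (h : X ^ (b i - b (i + 1)) ∣ q) :
    F.elem i i q - F.elem (i + 1) (i + 1) q ∈ derivedCentralizer x := by
  have hi : b (i + 1) ≤ b i := hb i.le_succ
  have h1 : X ^ b i ∣ X ^ b (i + 1) * q := by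
    rw [show b i = b (i + 1) + (b i - b (i + 1)) by omega, pow_add]
    exact mul_dvd_mul_left _ h
  have h2 : (X : K[X]) ^ b (i + 1) ∣ X ^ b i * 1 := by simpa using pow_dvd_pow _ hi
  have := commutator_mem (F.elem_commute h1) (F.elem_commute h2)
  rwa [F.elem_mul_elem _ h1, F.elem_mul_elem _ h2, if_pos rfl, if_pos rfl, mul_one,
    one_mul] at this

theorem sum_elem_eq (p : ℕ → K[X]) (n : ℕ) :
    ∑ i ∈ Finset.range n, F.elem i i (p i) =
      ∑ i ∈ Finset.range n, (F.elem i i (∑ j ∈ Finset.range (i + 1), p j) -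
        F.elem (i + 1) (i + 1) (∑ j ∈ Finset.range (i + 1), p j)) +
      F.elem n n (∑ j ∈ Finset.range n, p j) := by
  induction n with
  | zero => simp
  | succ n ih =>
    rw [Finset.sum_range_succ, ih, Finset.sum_range_succ (fun i => F.elem i i _ - _),
      Finset.sum_range_succ p n, map_add (F.elem n n)]
    abel

theorem mem_derivedCentralizer_iff (hb : Antitone b) {u : Module.End K V} (hu : Commute x u) :
    u ∈ derivedCentralizer x ↔ ∀ i < m, X ^ (b i - b (i + 1)) ∣ F.partialTrace i u := by
  constructor
  · intro h i hi
    clear hu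
    induction h using Submodule.span_induction with
    | mem w hw =>
      obtain ⟨u, v, hu, hv, rfl⟩ := hw
      exact F.dvd_partialTrace_commutator hb hi hu hv
    | zero => simp
    | add v w _ _ hv hw => simpa using dvd_add hv hw
    | smul c v _ hv => simpa [smul_eq_C_mul] using hv.mul_left (C c)
  · intro h
    rw [F.eq_sum_elem hu]
    have hdiag : ∑ i ∈ Finset.range m, F.elem i i (F.coord i (u (F.gen i))) ∈
        derivedCentralizer x := by
      have hm (q : K[X]) : F.elem m m q = 0 :=
        LinearMap.ext fun v => by simp [elem_apply, F.gen_eq_zero m le_rfl]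
      rw [F.sum_elem_eq, hm, add_zero]
      refine Submodule.sum_mem _ fun i hi => F.elem_sub_elem_succ_mem hb i ?_
      rw [← F.partialTrace_apply]
      exact h i (Finset.mem_range.mp hi)
    have hoff : ∑ j ∈ Finset.range m, ∑ i ∈ (Finset.range m).erase j,
        F.elem i j (F.coord i (u (F.gen j))) ∈ derivedCentralizer x :=
      Submodule.sum_mem _ fun j _ => Submodule.sum_mem _ fun i hi =>
        F.elem_mem_of_ne (Finset.ne_of_mem_erase hi) (F.dvd_coord_of_commute hu i j)
    convert add_mem hdiag hoff using 1
    rw [← Finset.sum_add_distrib]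
    exact Finset.sum_congr rfl fun j hj => (Finset.add_sum_erase _ _ hj).symm

theorem exists_dvd_partialTrace_sub (hb : Antitone b) (q : ℕ → K[X]) :
    ∃ u, Commute x u ∧ ∀ i < m, X ^ (b i - b (i + 1)) ∣ F.partialTrace i u - q i := by
  let r : ℕ → K[X] := fun n => Nat.casesOn n 0 q
  refine ⟨∑ i ∈ Finset.range m, F.elem i i (r (i + 1) - r i),
    Commute.sum_right _ _ _ fun i _ => F.elem_commute (Dvd.intro _ rfl), fun i hi => ?_⟩
  have hq : q i = ∑ j ∈ Finset.range (i + 1), (r (j + 1) - r j) := by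
    rw [Finset.sum_range_sub]
    simp [r]
  rw [hq, partialTrace_apply, ← Finset.sum_sub_distrib]
  refine Finset.dvd_sum fun j hj => ?_
  have hji : j < i + 1 := Finset.mem_range.mp hj
  have hbj : b i ≤ b j := hb (by omega)
  refine (pow_dvd_pow _ (show b i - b (i + 1) ≤ b j by omega)).trans ?_
  have : (∑ k ∈ Finset.range m, F.elem k k (r (k + 1) - r k)) (F.gen j) =
      aeval x (r (j + 1) - r j) (F.gen j) := by
    rw [LinearMap.sum_apply]
    simp only [elem_gen]
    rw [Finset.sum_ite_eq', if_pos (Finset.mem_range.mpr (by omega))]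
  rw [this]
  simpa using F.dvd_coord_gen j j (r (j + 1) - r j)

/-- The coefficients of the partial traces that vanish on commutators. -/
noncomputable def traceCoeff :
    Module.End K V →ₗ[K] ((Σ i : Fin m, Fin (b i - b (i + 1))) → K) :=
  LinearMap.pi fun s => lcoeff K s.2 ∘ₗ F.partialTrace s.1

theorem traceCoeff_apply (u : Module.End K V) (s : Σ i : Fin m, Fin (b i - b (i + 1))) :
    F.traceCoeff u s = (F.partialTrace s.1 u).coeff s.2 := rfl

theorem traceCoeff_eq_zero_iff (hb : Antitone b) {u : Module.End K V} (hu : Commute x u) :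
    F.traceCoeff u = 0 ↔ u ∈ derivedCentralizer x := by
  rw [F.mem_derivedCentralizer_iff hb hu]
  simp only [X_pow_dvd_iff]
  exact ⟨fun h i hi d hd => congrFun h ⟨⟨i, hi⟩, ⟨d, hd⟩⟩,
    fun h => funext fun s => h s.1 s.1.2 s.2 s.2.2⟩

theorem exists_traceCoeff_eq (hb : Antitone b)
    (f : (Σ i : Fin m, Fin (b i - b (i + 1))) → K) :
    ∃ u, Commute x u ∧ F.traceCoeff u = f := by
  obtain ⟨u, hu, h⟩ := F.exists_dvd_partialTrace_sub hb fun i =>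
    if hi : i < m then ∑ s : Fin (b i - b (i + 1)), monomial (s : ℕ) (f ⟨⟨i, hi⟩, s⟩) else 0
  refine ⟨u, hu, funext fun ⟨i, s⟩ => ?_⟩
  have := X_pow_dvd_iff.mp (h i i.2) s s.2
  rw [coeff_sub, sub_eq_zero] at this
  rw [traceCoeff_apply, this]
  simp [coeff_monomial, Fin.val_inj]

theorem sum_sub_succ (hb : Antitone b) (n : ℕ) :
    ∑ i ∈ Finset.range n, (b i - b (i + 1)) + b n = b 0 := by
  induction n with
  | zero => simp
  | succ n ih =>
    have : b (n + 1) ≤ b n := hb n.le_succ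
    rw [Finset.sum_range_succ]
    omega

theorem finrank_centralizer_eq [FiniteDimensional K V] (F : CyclicFrame x m b) (hb : Antitone b)
    (C : Submodule K (Module.End K V)) (hC : ∀ u, u ∈ C ↔ Commute x u) :
    Module.finrank K C = b 0 + Module.finrank K (derivedCentralizer x) := by
  have hle : derivedCentralizer x ≤ C := by
    refine Submodule.span_le.mpr ?_
    rintro _ ⟨u, v, hu, hv, rfl⟩
    exact (hC _).mpr ((hu.mul_right hv).sub_right (hv.mul_right hu))
  have hker : LinearMap.ker (F.traceCoeff.domRestrict C) =
      (derivedCentralizer x).comap C.subtype := by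
    ext u
    exact F.traceCoeff_eq_zero_iff hb ((hC u).mp u.2)
  have hrange : LinearMap.range (F.traceCoeff.domRestrict C) = ⊤ := by
    refine LinearMap.range_eq_top.mpr fun f => ?_
    obtain ⟨u, hu, h⟩ := F.exists_traceCoeff_eq hb f
    exact ⟨⟨u, (hC u).mpr hu⟩, h⟩
  have h := LinearMap.finrank_range_add_finrank_ker (F.traceCoeff.domRestrict C)
  have hsum := sum_sub_succ hb m
  rw [F.eq_zero m le_rfl, add_zero, Finset.sum_range] at hsum
  rw [hker, hrange, finrank_top, (Submodule.comapSubtypeEquivOfLe hle).finrank_eq,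
    Module.finrank_fintype_fun_eq_card, Fintype.card_sigma] at h
  simp only [Fintype.card_fin] at h
  rw [← h, hsum]

/-- A basis consisting of the vectors `x ^ k (e i)`, `k < b i`, where `x ^ b i (e i) = 0`,
gives a cyclic frame. -/
noncomputable def ofBasis (B : Module.Basis (Σ i : Fin m, Fin (b i)) K V) (e : Fin m → V)
    (hB : ∀ i k, B ⟨i, k⟩ = (x ^ (k : ℕ)) (e i)) (he : ∀ i : Fin m, (x ^ b i) (e i) = 0)
    (hb : ∀ i, m ≤ i → b i = 0) : CyclicFrame x m b where
  gen i := if hi : i < m then e ⟨i, hi⟩ else 0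
  coord i := if hi : i < m then
    ∑ k : Fin (b i), monomial (k : ℕ) ∘ₗ B.coord ⟨⟨i, hi⟩, k⟩ else 0
  gen_eq_zero i hi := dif_neg (by omega)
  sum_coord v := by
    rw [Finset.sum_range]
    conv_rhs => rw [← B.sum_repr v, Fintype.sum_sigma]
    refine Finset.sum_congr rfl fun i _ => ?_
    simp [hB, aeval_monomial, Module.algebraMap_end_apply]
  coord_gen i j hi hj p := by
    simp only [dif_pos hi, dif_pos hj]
    induction p using Polynomial.induction_on' with
    | add p q hp hq =>
      convert dvd_add hp hq using 1
      split_ifs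
      · simp only [map_add, LinearMap.add_apply]
        ring
      · simp [-LinearMap.coe_sum]
    | monomial n a =>
      by_cases hn : n < b j
      · have h : aeval x (monomial n a) (e ⟨j, hj⟩) = a • B ⟨⟨j, hj⟩, ⟨n, hn⟩⟩ := by
          simp [hB, aeval_monomial, Module.algebraMap_end_apply]
        rw [h]
        convert dvd_zero _
        rw [sub_eq_zero]
        split_ifs with hij
        · subst hij
          rw [LinearMap.sum_apply, Finset.sum_eq_single ⟨n, hn⟩]
          · simp [smul_monomial]
          · intro k _ hk
            simp [hk.symm]
          · simp
        · have : j ≠ i := Ne.symm hij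
          simp [this]
      · have h : aeval x (monomial n a) (e ⟨j, hj⟩) = 0 := by
          obtain ⟨c, rfl⟩ := Nat.exists_eq_add_of_le' (not_lt.mp hn)
          have := he ⟨j, hj⟩
          simp only at this
          simp [aeval_monomial, Module.algebraMap_end_apply, pow_add, this]
        rw [h]
        split_ifs with hij
        · subst hij
          rw [map_zero, zero_sub, dvd_neg, ← C_mul_X_pow_eq_monomial]
          exact (pow_dvd_pow _ (not_lt.mp hn)).mul_left _
        · simp
  pow_gen i := by
    split_ifs with hi
    · exact he ⟨i, hi⟩
    · simp
  eq_zero := hb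

end CyclicFrame

end

/-- Let `E = E₁ ⊕ … ⊕ Eₘ` be a finite-dimensional complex vector space graded by nonzero
subspaces with `dim Eᵢ = bᵢ`, `b₁ ≥ … ≥ bₘ ≥ 1`.  Let `x` be a nilpotent endomorphism of `E`
stabilizing each `Eᵢ` and restricting to a cyclic endomorphism of each `Eᵢ`, and let
`𝔥ₓ` be the centralizer of `x` in `gl(E)`.  Then the codimension of the derived algebra
`[𝔥ₓ, 𝔥ₓ]` in `𝔥ₓ` is `b₁`. -/
theorem codim_derived_centralizer_eq_b1
    (V : Type*) [AddCommGroup V] [Module ℂ V] [FiniteDimensional ℂ V]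
    (m : ℕ) (hm : 0 < m) (E : Fin m → Submodule ℂ V) (hE : DirectSum.IsInternal E)
    (b : Fin m → ℕ) (hb : ∀ i, Module.finrank ℂ (E i) = b i)
    (hmono : ∀ i j : Fin m, i ≤ j → b j ≤ b i) (hpos : ∀ i, 1 ≤ b i)
    (x : Module.End ℂ V) (hnil : IsNilpotent x)
    (hinv : ∀ i, ∀ v ∈ E i, x v ∈ E i)
    (hcyc : ∀ i, IsCyclicEnd (x.restrict (hinv i))) :
    Module.finrank ℂ
        (LinearMap.ker (LinearMap.mulLeft ℂ x - LinearMap.mulRight ℂ x)) -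
      Module.finrank ℂ
        (Submodule.span ℂ
          {w : Module.End ℂ V |
            ∃ u ∈ LinearMap.ker (LinearMap.mulLeft ℂ x - LinearMap.mulRight ℂ x),
            ∃ v ∈ LinearMap.ker (LinearMap.mulLeft ℂ x - LinearMap.mulRight ℂ x),
              w = u * v - v * u}) = b ⟨0, hm⟩ := by
  have hxr (i : Fin m) (k : ℕ) (v : E i) :
      (((x.restrict (hinv i)) ^ k) v : V) = (x ^ k) (v : V) := by
    induction k generalizing v with
    | zero => rfl
    | succ k ih =>
      rw [pow_succ, pow_succ, Module.End.mul_apply, Module.End.mul_apply, ih]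
      rfl
  choose e hli hsp using hcyc
  let blockBasis : ∀ i, Module.Basis (Fin (Module.finrank ℂ (E i))) ℂ (E i) := fun i =>
    Module.Basis.mk (hli i) (hsp i).ge
  let c : ℕ → ℕ := fun i => if hi : i < m then b ⟨i, hi⟩ else 0
  have hc (i : Fin m) : Module.finrank ℂ (E i) = c i := by simp [c, hb]
  let B : Module.Basis (Σ i : Fin m, Fin (c i)) ℂ V :=
    (hE.collectedBasis blockBasis).reindex (Equiv.sigmaCongrRight fun i => finCongr (hc i))
  have hcanti : Antitone c := by
    intro i j hij
    by_cases hj : j < m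
    · simpa [c, hj, hij.trans_lt hj] using hmono ⟨i, hij.trans_lt hj⟩ ⟨j, hj⟩ hij
    · simp [c, hj]
  have hpow (i : Fin m) : (x ^ c i) (e i : V) = 0 := by
    rw [← hxr, ← hc]
    obtain ⟨n, hn⟩ := hnil
    have h : ((x.restrict (hinv i)) ^ n) (e i) = 0 := by
      ext
      rw [hxr, hn]
      rfl
    have := Module.End.ker_pow_le_ker_pow_finrank (x.restrict (hinv i)) n h
    rw [LinearMap.mem_ker.mp this]
    rfl
  let F : CyclicFrame x m c := CyclicFrame.ofBasis B (fun i => (e i : V))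
    (fun i k => by simp [B, blockBasis, hxr]; rfl) hpow (fun i hi => dif_neg (by omega))
  have hC (u : Module.End ℂ V) :
      u ∈ LinearMap.ker (LinearMap.mulLeft ℂ x - LinearMap.mulRight ℂ x) ↔ Commute x u := by
    simp [sub_eq_zero, commute_iff_eq]
  have hD : Submodule.span ℂ {w : Module.End ℂ V |
      ∃ u ∈ LinearMap.ker (LinearMap.mulLeft ℂ x - LinearMap.mulRight ℂ x),
      ∃ v ∈ LinearMap.ker (LinearMap.mulLeft ℂ x - LinearMap.mulRight ℂ x),
        w = u * v - v * u} = CyclicFrame.derivedCentralizer x := by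
    unfold CyclicFrame.derivedCentralizer
    congr 1
    ext w
    simp only [hC, Set.mem_ofPred_eq]
    exact ⟨fun ⟨u, hu, v, hv, h⟩ => ⟨u, v, hu, hv, h⟩, fun ⟨u, v, hu, hv, h⟩ => ⟨u, hu, v, hv, h⟩⟩
  rw [hD, F.finrank_centralizer_eq hcanti _ hC, Nat.add_sub_cancel]
  exact dif_pos hm
end

section
/- Let x ∈ sl(n,ℂ) be a nilpotent traceless matrix whose Jordan type is the partition b_1 ≥ b_2 ≥ … ≥ b_m ≥ 1 of n; that is, ℂⁿ decomposes as a direct sum of x-invariant subspaces V_1 ⊕ … ⊕ V_m with dim V_i = b_i on each of which x restricts to a cyclic (nilpotent) endomorphism. Let 𝔰_x = {y ∈ sl(n,ℂ) : xy − yx = 0} be the centralizer of x in sl(n,ℂ). Then dim 𝔰_x − dim [𝔰_x, 𝔰_x] = b_1 − 1. -/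
open Module

/-- A basis of `W` made of strings `gen i, x (gen i), …, x ^ (b i - 1) (gen i)` of the
endomorphism `x`, with `x ^ (b i)` killing `gen i`. -/
structure StringBasis {K W : Type*} [Field K] [AddCommGroup W] [Module K W] {m : ℕ}
    (x : End K W) (b : Fin m → ℕ) where
  /-- The generators of the strings. -/
  gen : Fin m → W
  /-- The underlying basis. -/
  basis : Basis (Σ i, Fin (b i)) K W
  basis_apply : ∀ i (k : Fin (b i)), basis ⟨i, k⟩ = (x ^ (k : ℕ)) (gen i)
  pow_gen : ∀ i, (x ^ b i) (gen i) = 0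

/-- The elements of an algebra commuting with `x`. -/
abbrev centralizerSubmodule {K A : Type*} [Field K] [Ring A] [Algebra K A] (x : A) :
    Submodule K A :=
  LinearMap.ker (LinearMap.mulLeft K x - LinearMap.mulRight K x)

/-- The span of the commutators of elements of `S`. -/
abbrev commutatorSpan {K A : Type*} [Field K] [Ring A] [Algebra K A] (S : Submodule K A) :
    Submodule K A :=
  Submodule.span K {w : A | ∃ u ∈ S, ∃ v ∈ S, w = u * v - v * u}

theorem mem_centralizerSubmodule {K A : Type*} [Field K] [Ring A] [Algebra K A] {x y : A} :
    y ∈ centralizerSubmodule (K := K) x ↔ x * y = y * x := by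
  simp [sub_eq_zero]

theorem commutatorSpan_le_centralizerSubmodule {K A : Type*} [Field K] [Ring A] [Algebra K A]
    (x : A) : commutatorSpan (centralizerSubmodule (K := K) x) ≤ centralizerSubmodule x := by
  refine Submodule.span_le.2 ?_
  rintro _ ⟨u, hu, v, hv, rfl⟩
  rw [mem_centralizerSubmodule] at hu hv
  rw [SetLike.mem_coe, mem_centralizerSubmodule]
  have hu' : Commute x u := hu
  have hv' : Commute x v := hv
  exact ((hu'.mul_right hv').sub_right (hv'.mul_right hu')).eq

theorem finrank_map_add_finrank_inf_ker {K V W : Type*} [Field K] [AddCommGroup V] [Module K V]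
    [AddCommGroup W] [Module K W] [FiniteDimensional K V] (f : V →ₗ[K] W) (S : Submodule K V) :
    finrank K (S.map f) + finrank K (S ⊓ LinearMap.ker f : Submodule K V) = finrank K S := by
  rw [← LinearMap.finrank_range_add_finrank_ker (f.domRestrict S), LinearMap.range_domRestrict,
    LinearMap.ker_domRestrict, ← Submodule.map_comap_subtype,
    Submodule.finrank_map_subtype_eq]

namespace StringBasis

variable {K W : Type*} [Field K] [AddCommGroup W] [Module K W] {m : ℕ}
  {x : End K W} {b : Fin m → ℕ} (J : StringBasis x b)

/-- The `k`-th vector of the `i`-th string; it vanishes for `b i ≤ k`. -/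
def vec (i : Fin m) (k : ℕ) : W := (x ^ k) (J.gen i)

theorem basis_eq_vec (i : Fin m) (k : Fin (b i)) : J.basis ⟨i, k⟩ = J.vec i k :=
  J.basis_apply i k

theorem vec_eq_basis {i : Fin m} {k : ℕ} (h : k < b i) : J.vec i k = J.basis ⟨i, ⟨k, h⟩⟩ :=
  (J.basis_apply i ⟨k, h⟩).symm

theorem pow_vec (i : Fin m) (k l : ℕ) : (x ^ l) (J.vec i k) = J.vec i (l + k) := by
  simp [vec, pow_add]

theorem apply_vec (i : Fin m) (k : ℕ) : x (J.vec i k) = J.vec i (k + 1) := by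
  simp [vec, pow_succ']

theorem vec_eq_zero {i : Fin m} {k : ℕ} (h : b i ≤ k) : J.vec i k = 0 := by
  obtain ⟨l, rfl⟩ := Nat.exists_eq_add_of_le' h
  simp [vec, pow_add, J.pow_gen]

theorem ext_vec {U : Type*} [AddCommGroup U] [Module K U] {f g : W →ₗ[K] U}
    (h : ∀ i k, f (J.vec i k) = g (J.vec i k)) : f = g :=
  J.basis.ext fun ⟨i, k⟩ => by simpa [basis_eq_vec] using h i k

theorem ext_gen {u v : End K W} (hu : x * u = u * x) (hv : x * v = v * x)
    (h : ∀ i, u (J.vec i 0) = v (J.vec i 0)) : u = v := by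
  refine J.ext_vec fun i k => ?_
  have hu' : Commute (x ^ k) u := Commute.pow_left hu k
  have hv' : Commute (x ^ k) v := Commute.pow_left hv k
  have e : J.vec i k = (x ^ k) (J.vec i 0) := by simp [pow_vec]
  rw [e, ← Module.End.mul_apply, ← Module.End.mul_apply, ← hu'.eq, ← hv'.eq,
    Module.End.mul_apply, Module.End.mul_apply, h]

theorem coord_vec (i : Fin m) (k : Fin (b i)) (s : Fin m) (l : ℕ) :
    J.basis.coord ⟨i, k⟩ (J.vec s l) = if s = i ∧ l = k then 1 else 0 := by
  by_cases hl : l < b s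
  · rw [J.vec_eq_basis hl, Basis.coord_apply, Basis.repr_self, Finsupp.single_apply]
    refine if_congr ⟨?_, ?_⟩ rfl rfl
    · intro h
      cases h
      simp
    · rintro ⟨rfl, h⟩
      simp [h]
  · rw [J.vec_eq_zero (not_lt.1 hl), map_zero, if_neg]
    rintro ⟨rfl, rfl⟩
    exact hl k.2

theorem coord_pow (i : Fin m) (k : Fin (b i)) (r : ℕ) (h : k + r < b i) (w : W) :
    J.basis.coord ⟨i, ⟨k + r, h⟩⟩ ((x ^ r) w) = J.basis.coord ⟨i, k⟩ w := by
  have : J.basis.coord ⟨i, ⟨k + r, h⟩⟩ ∘ₗ (x ^ r) = J.basis.coord ⟨i, k⟩ := by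
    refine J.ext_vec fun s l => ?_
    rw [LinearMap.comp_apply, pow_vec, coord_vec, coord_vec]
    refine if_congr ?_ rfl rfl
    simp only
    omega
  exact LinearMap.congr_fun this w

/-- The map sending the `j`-th generator to the `i`-th string, shifted as little as possible,
and killing the other strings. -/
noncomputable def link (i j : Fin m) : End K W :=
  J.basis.constr K fun p => if p.1 = j then J.vec i (p.2 + (b i - b j)) else 0

theorem link_vec (i j s : Fin m) (k : ℕ) :
    J.link i j (J.vec s k) = if s = j then J.vec i (k + (b i - b j)) else 0 := by
  by_cases hk : k < b s
  · rw [J.vec_eq_basis hk, link, Basis.constr_basis]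
  · rw [J.vec_eq_zero (not_lt.1 hk), map_zero]
    split_ifs with h
    · subst h
      rw [J.vec_eq_zero (by omega)]
    · rfl

theorem link_comm (i j : Fin m) : x * J.link i j = J.link i j * x := by
  refine J.ext_vec fun s k => ?_
  simp only [Module.End.mul_apply, link_vec, apply_vec]
  split_ifs
  · rw [apply_vec]; congr 1; omega
  · simp

theorem pow_mul_link_comm (k : ℕ) (i j : Fin m) :
    x * (x ^ k * J.link i j) = (x ^ k * J.link i j) * x := by
  have h : Commute x (J.link i j) := J.link_comm i j
  exact ((Commute.refl x).pow_right k |>.mul_right h).eq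

theorem sum_link_self : ∑ i, J.link i i = 1 := by
  refine J.ext_vec fun s k => ?_
  simp [LinearMap.sum_apply, link_vec]

theorem centralizerSubmodule_eq_span : centralizerSubmodule (K := K) x =
    Submodule.span K (Set.range fun p : ℕ × Fin m × Fin m => x ^ p.1 * J.link p.2.1 p.2.2) := by
  apply le_antisymm
  · intro u hu
    rw [mem_centralizerSubmodule] at hu
    have key : u = ∑ j, ∑ p : (Σ i, Fin (b i)), J.basis.coord p (u (J.vec j 0)) •
        (x ^ (p.2 - (b p.1 - b j)) * J.link p.1 j) := by
      refine J.ext_gen hu ?_ fun s => ?_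
      · rw [← mem_centralizerSubmodule (K := K)]
        exact Submodule.sum_mem _ fun j _ => Submodule.sum_mem _ fun p _ =>
          Submodule.smul_mem _ _ (mem_centralizerSubmodule.2 (J.pow_mul_link_comm _ _ _))
      · simp only [LinearMap.sum_apply, LinearMap.smul_apply, Module.End.mul_apply, link_vec]
        rw [Finset.sum_eq_single s (by
          intro j _ hj
          simp [Ne.symm hj]) (by simp)]
        conv_lhs => rw [← J.basis.sum_repr (u (J.vec s 0))]
        refine Finset.sum_congr rfl ?_
        rintro ⟨i, k⟩ -
        rw [if_pos rfl, pow_vec, ← Basis.coord_apply]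
        by_cases hk : b i - b s ≤ k
        · rw [basis_eq_vec]
          congr 2
          simp only
          omega
        · have hlt : k + b s < b i := by omega
          have hc : Commute (x ^ b s) u := Commute.pow_left hu _
          have hz : (x ^ b s) (u (J.vec s 0)) = 0 := by
            rw [← Module.End.mul_apply, hc.eq, Module.End.mul_apply, pow_vec,
              J.vec_eq_zero (by omega), map_zero]
          rw [← J.coord_pow i k (b s) hlt, hz, map_zero, zero_smul, zero_smul]
    rw [key]
    exact Submodule.sum_mem _ fun j _ => Submodule.sum_mem _ fun p _ =>
      Submodule.smul_mem _ _ (Submodule.subset_span ⟨(_, p.1, j), rfl⟩)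
  · rw [Submodule.span_le]
    rintro _ ⟨p, rfl⟩
    exact mem_centralizerSubmodule.2 (J.pow_mul_link_comm _ _ _)

/-- The diagonal part of an endomorphism, recorded by the images of the generators. -/
noncomputable def diagPart : End K W →ₗ[K] W :=
  ∑ i, J.link i i ∘ₗ LinearMap.applyₗ (J.vec i 0)

theorem diagPart_apply (u : End K W) :
    J.diagPart u = ∑ i, J.link i i (u (J.vec i 0)) := by
  simp [diagPart, LinearMap.sum_apply]

theorem diagPart_pow_mul_link (k : ℕ) (i j : Fin m) :
    J.diagPart (x ^ k * J.link i j) = if i = j then J.vec i k else 0 := by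
  rw [diagPart_apply]
  simp only [Module.End.mul_apply, link_vec, apply_ite (x ^ k), pow_vec, map_zero]
  rw [Finset.sum_eq_single j]
  · simp only [if_true, link_vec]
    split_ifs with h
    · subst h; simp
    · rfl
  · intro s _ hs
    simp [hs]
  · simp

theorem link_mul_link (i j s t : Fin m) : J.link i j * J.link s t =
    if s = j then x ^ ((b i - b j) + (b j - b t) - (b i - b t)) * J.link i t else 0 := by
  refine J.ext_vec fun r k => ?_
  simp only [Module.End.mul_apply, link_vec]
  split_ifs with h1 h2 h2
  · subst h1 h2
    simp only [link_vec, if_true, Module.End.mul_apply, pow_vec]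
    congr 1
    omega
  · rw [link_vec, if_neg h2, LinearMap.zero_apply]
  · rw [map_zero, Module.End.mul_apply, link_vec, if_neg h1, map_zero]
  · simp

theorem diagPart_mul (k l : ℕ) (i j s t : Fin m) :
    J.diagPart ((x ^ k * J.link i j) * (x ^ l * J.link s t)) =
      if s = j ∧ i = t then J.vec i (k + l + ((b i - b j) + (b j - b i))) else 0 := by
  have hc : Commute (J.link i j) (x ^ l) := (Commute.pow_left (J.link_comm i j) l).symm
  have e : (x ^ k * J.link i j) * (x ^ l * J.link s t) =
      x ^ (k + l) * (J.link i j * J.link s t) := by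
    rw [pow_add, mul_assoc, ← mul_assoc (J.link i j), hc.eq]
    simp only [mul_assoc]
  rw [e, link_mul_link]
  by_cases h : s = j
  · rw [if_pos h, ← mul_assoc, ← pow_add, diagPart_pow_mul_link]
    by_cases h' : i = t
    · subst h'
      rw [if_pos rfl, if_pos ⟨h, rfl⟩]
      congr 1
      omega
    · rw [if_neg h', if_neg (fun H => h' H.2)]
  · rw [if_neg h, if_neg (fun H => h H.1), mul_zero, map_zero]

theorem map_diagPart_centralizerSubmodule :
    (centralizerSubmodule (K := K) x).map J.diagPart = ⊤ := by
  rw [eq_top_iff, ← J.basis.span_eq, Submodule.span_le]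
  rintro _ ⟨⟨i, k⟩, rfl⟩
  refine ⟨x ^ (k : ℕ) * J.link i i, mem_centralizerSubmodule.2 (J.pow_mul_link_comm _ _ _), ?_⟩
  rw [diagPart_pow_mul_link, if_pos rfl, basis_eq_vec]

theorem link_self_mul_mul_link_self_eq_zero {u : End K W} (hu : x * u = u * x)
    (h : J.diagPart u = 0) (i : Fin m) : J.link i i * u * J.link i i = 0 := by
  have hp : Commute x (J.link i i) := J.link_comm i i
  have hu' : Commute x u := hu
  refine J.ext_gen ((hp.mul_right hu').mul_right hp).eq (by simp) fun s => ?_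
  simp only [Module.End.mul_apply, link_vec, LinearMap.zero_apply]
  split_ifs with hs
  · subst hs
    have h2 : J.link s s (J.diagPart u) = 0 := by rw [h, map_zero]
    rw [diagPart_apply, map_sum, Finset.sum_eq_single s] at h2
    · rw [← Module.End.mul_apply, link_mul_link] at h2
      simpa using h2
    · intro j _ hj
      rw [← Module.End.mul_apply, link_mul_link, if_neg hj, LinearMap.zero_apply]
    · simp
  · simp

theorem centralizerSubmodule_inf_ker_diagPart_le :
    centralizerSubmodule (K := K) x ⊓ LinearMap.ker J.diagPart ≤
      commutatorSpan (centralizerSubmodule x) := by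
  rintro u ⟨hu, hd⟩
  rw [SetLike.mem_coe, mem_centralizerSubmodule] at hu
  have key : u = ∑ i, ∑ j, J.link i i * u * J.link j j := by
    simp only [← Finset.mul_sum, ← Finset.sum_mul, sum_link_self, one_mul, mul_one]
  rw [key]
  refine Submodule.sum_mem _ fun i _ => Submodule.sum_mem _ fun j _ => ?_
  by_cases hij : i = j
  · subst hij
    rw [J.link_self_mul_mul_link_self_eq_zero hu hd]
    exact zero_mem _
  · have hp : ∀ i, Commute x (J.link i i) := fun i => J.link_comm i i
    have hu' : Commute x u := hu
    refine Submodule.subset_span ⟨J.link i i, mem_centralizerSubmodule.2 (hp i),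
      J.link i i * u * J.link j j,
      mem_centralizerSubmodule.2 (((hp i).mul_right hu').mul_right (hp j)).eq, ?_⟩
    have h1 : J.link i i * J.link i i = J.link i i := by
      rw [link_mul_link]; simp
    have h2 : J.link j j * J.link i i = 0 := by
      rw [link_mul_link, if_neg hij]
    rw [mul_assoc _ (J.link j j), h2, mul_zero, sub_zero, ← mul_assoc, ← mul_assoc, h1]

/-- The predecessor of an index, with the first index its own predecessor. -/
def pred (j : Fin m) : Fin m := ⟨j - 1, by omega⟩

/-- The map sending each string to the differences between its predecessor and itself that are
diagonal parts of commutators. -/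
noncomputable def diffMap : End K W :=
  ∑ j, (J.link (pred j) j - x ^ (b (pred j) - b j) * J.link j j)

theorem diffMap_vec (j : Fin m) (k : ℕ) : J.diffMap (J.vec j k) =
    J.vec (pred j) (k + (b (pred j) - b j)) - J.vec j (k + (b (pred j) - b j)) := by
  rw [diffMap, LinearMap.sum_apply, Finset.sum_eq_single j]
  · simp only [LinearMap.sub_apply, Module.End.mul_apply, link_vec, if_true, pow_vec]
    congr 2
    omega
  · intro s _ hs
    simp [link_vec, Ne.symm hs]
  · simp

theorem vec_sub_vec_mem_range_diffMap (hmono : ∀ i j : Fin m, i ≤ j → b j ≤ b i)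
    (i : Fin m) (k t : ℕ) (ht : i + t < m) (hk : b i - b ⟨i + t, ht⟩ ≤ k) :
    J.vec i k - J.vec ⟨i + t, ht⟩ k ∈ LinearMap.range J.diffMap := by
  induction t with
  | zero => simp
  | succ t ih =>
    have ht' : i + t < m := by omega
    have h1 : b ⟨i + t, ht'⟩ ≤ b i := hmono _ _ (by simp [Fin.le_def])
    have h2 : b ⟨i + (t + 1), ht⟩ ≤ b ⟨i + t, ht'⟩ := hmono _ _ (by simp [Fin.le_def])
    rw [← sub_add_sub_cancel _ (J.vec ⟨i + t, ht'⟩ k)]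
    refine Submodule.add_mem _ (ih ht' (by omega)) ?_
    have hp : pred ⟨i + (t + 1), ht⟩ = ⟨i + t, ht'⟩ := rfl
    refine ⟨J.vec ⟨i + (t + 1), ht⟩ (k - (b ⟨i + t, ht'⟩ - b ⟨i + (t + 1), ht⟩)), ?_⟩
    rw [diffMap_vec, hp, Nat.sub_add_cancel (by omega)]

theorem vec_sub_vec_mem_range_diffMap_of_le (hmono : ∀ i j : Fin m, i ≤ j → b j ≤ b i)
    (i j : Fin m) (k : ℕ) (hk : (b i - b j) + (b j - b i) ≤ k) :
    J.vec i k - J.vec j k ∈ LinearMap.range J.diffMap := by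
  wlog hij : i ≤ j generalizing i j
  · rw [← neg_sub]
    exact Submodule.neg_mem _ (this j i (by omega) (not_le.1 hij).le)
  have h : i + (j - i : ℕ) < m := by omega
  have e : (⟨i + (j - i : ℕ), h⟩ : Fin m) = j := Fin.ext (by simp only; omega)
  have := J.vec_sub_vec_mem_range_diffMap hmono i k (j - i) h (by rw [e]; omega)
  rwa [e] at this

theorem diagPart_commutator_mem (hmono : ∀ i j : Fin m, i ≤ j → b j ≤ b i) {u v : End K W}
    (hu : u ∈ centralizerSubmodule (K := K) x) (hv : v ∈ centralizerSubmodule (K := K) x) :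
    J.diagPart (u * v - v * u) ∈ LinearMap.range J.diffMap := by
  rw [J.centralizerSubmodule_eq_span] at hu hv
  induction hu, hv using Submodule.span_induction₂ with
  | mem_mem u v hu hv =>
    obtain ⟨⟨k, i, j⟩, rfl⟩ := hu
    obtain ⟨⟨l, s, t⟩, rfl⟩ := hv
    simp only [map_sub, diagPart_mul]
    by_cases h : s = j ∧ i = t
    · obtain ⟨rfl, rfl⟩ := h
      simp only [and_self, if_true]
      have e : l + k + ((b s - b i) + (b i - b s)) = k + l + ((b i - b s) + (b s - b i)) := by
        omega
      rw [e]
      exact J.vec_sub_vec_mem_range_diffMap_of_le hmono i s _ (by omega)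
    · rw [if_neg h, if_neg (fun H => h ⟨H.2, H.1⟩), sub_zero]
      exact zero_mem _
  | zero_left v hv => simp
  | zero_right u hu => simp
  | add_left u u' v hu hu' hv h h' =>
    convert Submodule.add_mem _ h h' using 1
    rw [← map_add]; congr 1; noncomm_ring
  | add_right u v v' hu hv hv' h h' =>
    convert Submodule.add_mem _ h h' using 1
    rw [← map_add]; congr 1; noncomm_ring
  | smul_left r u v hu hv h =>
    convert Submodule.smul_mem _ r h using 1
    rw [← map_smul]; simp [smul_sub]
  | smul_right r u v hu hv h =>
    convert Submodule.smul_mem _ r h using 1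
    rw [← map_smul]; simp [smul_sub]

theorem map_diagPart_commutatorSpan (hmono : ∀ i j : Fin m, i ≤ j → b j ≤ b i) :
    (commutatorSpan (centralizerSubmodule (K := K) x)).map J.diagPart =
      LinearMap.range J.diffMap := by
  apply le_antisymm
  · rw [Submodule.map_le_iff_le_comap, Submodule.span_le]
    rintro _ ⟨u, hu, v, hv, rfl⟩
    exact J.diagPart_commutator_mem hmono hu hv
  · rw [LinearMap.range_eq_map, ← J.basis.span_eq, Submodule.map_span, Submodule.span_le]
    rintro _ ⟨_, ⟨⟨j, k⟩, rfl⟩, rfl⟩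
    have hb : b j ≤ b (pred j) := hmono _ _ (by simp [pred, Fin.le_def])
    refine ⟨_, Submodule.subset_span ⟨x ^ (k : ℕ) * J.link (pred j) j,
      mem_centralizerSubmodule.2 (J.pow_mul_link_comm _ _ _), x ^ 0 * J.link j (pred j),
      mem_centralizerSubmodule.2 (J.pow_mul_link_comm _ _ _), rfl⟩, ?_⟩
    rw [map_sub, diagPart_mul, diagPart_mul, if_pos ⟨rfl, rfl⟩, if_pos ⟨rfl, rfl⟩, basis_eq_vec,
      diffMap_vec]
    congr 2 <;> omega

theorem link_self_apply_eq_zero {i j : Fin m} (hij : b j ≤ b i) {v : W}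
    (h : J.link i j v = 0) : J.link j j v = 0 := by
  let L : End K W := J.basis.constr K fun p =>
    if p.1 = i ∧ b i - b j ≤ p.2 then J.vec j (p.2 - (b i - b j)) else 0
  have hL : L * J.link i j = J.link j j := by
    refine J.basis.ext ?_
    rintro ⟨s, k⟩
    rw [basis_eq_vec, Module.End.mul_apply, link_vec, link_vec]
    split_ifs with hs
    · subst hs
      have hlt : k + (b i - b s) < b i := by omega
      rw [J.vec_eq_basis hlt, Basis.constr_basis, if_pos ⟨rfl, by simp⟩]
      simp
    · simp
  rw [← hL, Module.End.mul_apply, h, map_zero]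

theorem link_self_mul_diffMap (t : ℕ) (ht : t + 1 < m) :
    J.link ⟨t, by omega⟩ ⟨t, by omega⟩ * J.diffMap =
      J.link ⟨t, by omega⟩ ⟨t + 1, ht⟩ - if t = 0 then 0 else
        x ^ (b (pred ⟨t, by omega⟩) - b ⟨t, by omega⟩) *
          J.link ⟨t, by omega⟩ ⟨t, by omega⟩ := by
  refine J.ext_vec fun j k => ?_
  rw [Module.End.mul_apply, diffMap_vec, map_sub, link_vec, link_vec, LinearMap.sub_apply,
    link_vec]
  have hp : pred j = ⟨t, by omega⟩ ↔ (j : ℕ) = t + 1 ∨ (t = 0 ∧ (j : ℕ) = 0) := by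
    rw [Fin.ext_iff]
    simp only [pred]
    omega
  rcases lt_trichotomy (j : ℕ) (t + 1) with h | h | h
  · have h1 : j ≠ ⟨t + 1, ht⟩ := fun H => by simp [H] at h
    rw [if_neg h1]
    by_cases ht0 : t = 0
    · subst ht0
      have hj : j = ⟨0, by omega⟩ := Fin.ext (by simp only; omega)
      simp [hj, pred]
    · rw [if_neg (by rw [hp]; omega), if_neg ht0, Module.End.mul_apply, link_vec]
      split_ifs with hj
      · subst hj
        rw [pow_vec]
        simp [add_comm]
      · simp
  · have hj : j = ⟨t + 1, ht⟩ := Fin.ext h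
    subst hj
    have h2 : (⟨t + 1, ht⟩ : Fin m) ≠ ⟨t, by omega⟩ := by simp
    rw [if_neg h2, if_pos rfl, if_pos (hp.2 (Or.inl rfl))]
    have hpe : pred (⟨t + 1, ht⟩ : Fin m) = ⟨t, by omega⟩ := rfl
    split_ifs with ht0
    · simp [hpe]
    · rw [Module.End.mul_apply, link_vec, if_neg h2]
      simp [hpe]
  · have h1 : j ≠ ⟨t + 1, ht⟩ := fun H => by simp [H] at h
    have h2 : j ≠ ⟨t, by omega⟩ := fun H => by simp [H] at h
    rw [if_neg h1, if_neg h2, if_neg (by rw [hp]; omega)]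
    split_ifs
    · simp
    · rw [Module.End.mul_apply, link_vec, if_neg h2]
      simp

theorem ker_diffMap (hmono : ∀ i j : Fin m, i ≤ j → b j ≤ b i) (hm : 0 < m) :
    LinearMap.ker J.diffMap =
      Submodule.span K (Set.range fun k : Fin (b ⟨0, hm⟩) => J.basis ⟨⟨0, hm⟩, k⟩) := by
  apply le_antisymm
  · intro v hv
    rw [LinearMap.mem_ker] at hv
    have key : ∀ t (ht : t + 1 < m), J.link ⟨t + 1, ht⟩ ⟨t + 1, ht⟩ v = 0 := by
      intro t
      induction t with
      | zero =>
        intro ht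
        refine J.link_self_apply_eq_zero (hmono ⟨0, hm⟩ _ (by simp [Fin.le_def])) ?_
        have := LinearMap.congr_fun (J.link_self_mul_diffMap 0 ht) v
        simpa [hv, eq_comm] using this
      | succ t ih =>
        intro ht
        refine J.link_self_apply_eq_zero
          (hmono ⟨t + 1, by omega⟩ _ (by simp [Fin.le_def])) ?_
        have := LinearMap.congr_fun (J.link_self_mul_diffMap (t + 1) ht) v
        simpa [hv, eq_comm, ih (by omega)] using this
    have hv0 : v = J.link ⟨0, hm⟩ ⟨0, hm⟩ v := by
      conv_lhs => rw [← Module.End.one_apply (R := K) v, ← J.sum_link_self, LinearMap.sum_apply]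
      refine Finset.sum_eq_single _ ?_ (by simp)
      rintro ⟨_ | t, ht⟩ _ h
      · exact absurd rfl h
      · exact key t ht
    have hr : LinearMap.range (J.link ⟨0, hm⟩ ⟨0, hm⟩) ≤
        Submodule.span K (Set.range fun k : Fin (b ⟨0, hm⟩) => J.basis ⟨⟨0, hm⟩, k⟩) := by
      rw [LinearMap.range_eq_map, ← J.basis.span_eq, Submodule.map_span, Submodule.span_le]
      rintro _ ⟨_, ⟨⟨j, k⟩, rfl⟩, rfl⟩
      rw [basis_eq_vec, link_vec, SetLike.mem_coe]
      split_ifs with h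
      · subst h
        refine Submodule.subset_span ⟨k, ?_⟩
        simp [basis_eq_vec]
      · exact zero_mem _
    rw [hv0]
    exact hr ⟨v, rfl⟩
  · rw [Submodule.span_le]
    rintro _ ⟨k, rfl⟩
    have hp : pred (⟨0, hm⟩ : Fin m) = ⟨0, hm⟩ := rfl
    simp [basis_eq_vec, diffMap_vec, hp]

theorem finrank_centralizerSubmodule (J : StringBasis x b)
    (hmono : ∀ i j : Fin m, i ≤ j → b j ≤ b i) (hm : 0 < m) :
    finrank K (centralizerSubmodule (K := K) x) =
      finrank K (commutatorSpan (centralizerSubmodule (K := K) x)) + b ⟨0, hm⟩ := by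
  have : FiniteDimensional K W := Module.Finite.of_basis J.basis
  have hC := finrank_map_add_finrank_inf_ker J.diagPart (centralizerSubmodule (K := K) x)
  have hD := finrank_map_add_finrank_inf_ker J.diagPart
    (commutatorSpan (centralizerSubmodule (K := K) x))
  have hinf : commutatorSpan (centralizerSubmodule (K := K) x) ⊓ LinearMap.ker J.diagPart =
      centralizerSubmodule (K := K) x ⊓ LinearMap.ker J.diagPart :=
    le_antisymm (inf_le_inf_right _ (commutatorSpan_le_centralizerSubmodule x))
      (le_inf J.centralizerSubmodule_inf_ker_diagPart_le inf_le_right)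
  rw [hinf, J.map_diagPart_commutatorSpan hmono] at hD
  rw [J.map_diagPart_centralizerSubmodule, finrank_top] at hC
  have hR := LinearMap.finrank_range_add_finrank_ker J.diffMap
  have hli : LinearIndependent K fun k : Fin (b ⟨0, hm⟩) => J.basis ⟨⟨0, hm⟩, k⟩ :=
    J.basis.linearIndependent.comp _ sigma_mk_injective
  rw [J.ker_diffMap hmono hm, finrank_span_eq_card hli, Fintype.card_fin] at hR
  omega

end StringBasis

theorem map_centralizerSubmodule {K A A' : Type*} [Field K] [Ring A] [Algebra K A] [Ring A']
    [Algebra K A'] (f : A ≃ₐ[K] A') (x : A) :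
    (centralizerSubmodule (K := K) x).map f.toLinearMap = centralizerSubmodule (f x) := by
  ext y
  rw [mem_centralizerSubmodule]
  constructor
  · rintro ⟨z, hz, rfl⟩
    rw [SetLike.mem_coe, mem_centralizerSubmodule] at hz
    simp only [AlgEquiv.toLinearMap_apply, ← map_mul, hz]
  · intro h
    refine ⟨f.symm y, mem_centralizerSubmodule.2 (f.injective ?_), by simp⟩
    simpa using h

theorem map_commutatorSpan {K A A' : Type*} [Field K] [Ring A] [Algebra K A] [Ring A']
    [Algebra K A'] (f : A ≃ₐ[K] A') (S : Submodule K A) :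
    (commutatorSpan S).map f.toLinearMap = commutatorSpan (S.map f.toLinearMap) := by
  rw [commutatorSpan, Submodule.map_span]
  congr 1
  ext w
  constructor
  · rintro ⟨_, ⟨u, hu, v, hv, rfl⟩, rfl⟩
    exact ⟨f u, ⟨u, hu, rfl⟩, f v, ⟨v, hv, rfl⟩, by simp⟩
  · rintro ⟨_, ⟨u, hu, rfl⟩, _, ⟨v, hv, rfl⟩, rfl⟩
    exact ⟨_, ⟨u, hu, v, hv, rfl⟩, by simp⟩

/-- The traceless elements of the centralizer have the same commutators as the whole
centralizer. -/
theorem commutatorSpan_ker_trace_inf {n : ℕ} (hn : n ≠ 0) (x : Matrix (Fin n) (Fin n) ℂ) :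
    commutatorSpan (LinearMap.ker (Matrix.traceLinearMap (Fin n) ℂ ℂ) ⊓
      centralizerSubmodule (K := ℂ) x) = commutatorSpan (centralizerSubmodule (K := ℂ) x) := by
  have hn' : (n : ℂ) ≠ 0 := Nat.cast_ne_zero.2 hn
  have key : ∀ u ∈ centralizerSubmodule (K := ℂ) x, u - (u.trace / n) • 1 ∈
      LinearMap.ker (Matrix.traceLinearMap (Fin n) ℂ ℂ) ⊓ centralizerSubmodule (K := ℂ) x := by
    intro u hu
    refine ⟨by simp [hn'], ?_⟩
    rw [SetLike.mem_coe]
    exact Submodule.sub_mem _ hu (Submodule.smul_mem _ _ (by simp))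
  apply le_antisymm
  · refine Submodule.span_mono ?_
    rintro _ ⟨u, hu, v, hv, rfl⟩
    exact ⟨u, hu.2, v, hv.2, rfl⟩
  · refine Submodule.span_mono ?_
    rintro _ ⟨u, hu, v, hv, rfl⟩
    refine ⟨_, key u hu, _, key v hv, ?_⟩
    simp only [mul_sub, sub_mul, Algebra.smul_mul_assoc, Algebra.mul_smul_comm, one_mul, mul_one]
    module

theorem finrank_ker_trace_inf_centralizerSubmodule {n : ℕ} (hn : n ≠ 0)
    (x : Matrix (Fin n) (Fin n) ℂ) :
    finrank ℂ (LinearMap.ker (Matrix.traceLinearMap (Fin n) ℂ ℂ) ⊓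
      centralizerSubmodule (K := ℂ) x : Submodule ℂ _) + 1 =
      finrank ℂ (centralizerSubmodule (K := ℂ) x) := by
  have hn' : (n : ℂ) ≠ 0 := Nat.cast_ne_zero.2 hn
  have h := finrank_map_add_finrank_inf_ker (Matrix.traceLinearMap (Fin n) ℂ ℂ)
    (centralizerSubmodule (K := ℂ) x)
  have htop : (centralizerSubmodule (K := ℂ) x).map (Matrix.traceLinearMap (Fin n) ℂ ℂ) = ⊤ := by
    rw [eq_top_iff]
    intro c _
    exact ⟨(c / n) • 1, Submodule.smul_mem _ _ (by simp), by simp [hn']⟩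
  rw [htop, finrank_top, finrank_self, inf_comm] at h
  omega

theorem pow_finrank_eq_zero_of_isNilpotent {K V : Type*} [Field K] [AddCommGroup V] [Module K V]
    [FiniteDimensional K V] {u : End K V} (hu : IsNilpotent u) : u ^ finrank K V = 0 := by
  have h := u.aeval_self_charpoly
  rw [hu.charpoly_eq_X_pow_finrank] at h
  simpa using h

/-- A nilpotent endomorphism that is cyclic on each summand of a direct sum decomposition has a
basis of strings. -/
theorem nonempty_stringBasis {W : Type*} [AddCommGroup W] [Module ℂ W] [FiniteDimensional ℂ W]
    {f : End ℂ W} (hf : IsNilpotent f) {m : ℕ} {V : Fin m → Submodule ℂ W}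
    (hV : DirectSum.IsInternal V) (hinv : ∀ i, ∀ v ∈ V i, f v ∈ V i)
    (hcyc : ∀ i, IsCyclicEnd (f.restrict (hinv i))) :
    Nonempty (StringBasis f fun i => finrank ℂ (V i)) := by
  choose e hli hsp using hcyc
  have hpow : ∀ i k (v : V i), (((f.restrict (hinv i)) ^ k) v : W) = (f ^ k) v := by
    intro i k v
    rw [Module.End.pow_restrict]
    rfl
  refine ⟨⟨fun i => e i, hV.collectedBasis fun i => Basis.mk (hli i) (hsp i).ge, ?_, ?_⟩⟩
  · intro i k
    simp [hpow]
  · intro i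
    have hn : IsNilpotent (f.restrict (hinv i)) := Module.End.isNilpotent.restrict _ hf
    rw [← hpow, pow_finrank_eq_zero_of_isNilpotent hn]
    simp

/-- Let `x ∈ sl(n,ℂ)` be nilpotent of Jordan type the partition `b₁ ≥ … ≥ bₘ ≥ 1` of `n`,
i.e. `ℂⁿ` is the direct sum of `x`-invariant subspaces `V₁ ⊕ … ⊕ Vₘ` with `dim Vᵢ = bᵢ`
on which `x` restricts to a cyclic endomorphism.  Let `𝔰ₓ` denote the centralizer of `x`
in `sl(n,ℂ)`.  Then `dim 𝔰ₓ − dim [𝔰ₓ, 𝔰ₓ] = b₁ − 1`. -/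
theorem codim_derived_sl_centralizer_eq_b1_sub_one
    (n : ℕ) (x : Matrix (Fin n) (Fin n) ℂ) (htr : x.trace = 0) (hnil : IsNilpotent x)
    (m : ℕ) (hm : 0 < m) (V : Fin m → Submodule ℂ (Fin n → ℂ))
    (hV : DirectSum.IsInternal V)
    (b : Fin m → ℕ) (hb : ∀ i, Module.finrank ℂ (V i) = b i)
    (hmono : ∀ i j : Fin m, i ≤ j → b j ≤ b i) (hpos : ∀ i, 1 ≤ b i)
    (hsum : ∑ i, b i = n)
    (hinv : ∀ i, ∀ v ∈ V i, x.mulVecLin v ∈ V i)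
    (hcyc : ∀ i, IsCyclicEnd (x.mulVecLin.restrict (hinv i))) :
    Module.finrank ℂ
        ↥((LinearMap.ker (Matrix.traceLinearMap (Fin n) ℂ ℂ)) ⊓
          (LinearMap.ker (LinearMap.mulLeft ℂ x - LinearMap.mulRight ℂ x))) -
      Module.finrank ℂ
        (Submodule.span ℂ
          {w : Matrix (Fin n) (Fin n) ℂ |
            ∃ u ∈ (LinearMap.ker (Matrix.traceLinearMap (Fin n) ℂ ℂ)) ⊓
                (LinearMap.ker (LinearMap.mulLeft ℂ x - LinearMap.mulRight ℂ x)),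
            ∃ v ∈ (LinearMap.ker (Matrix.traceLinearMap (Fin n) ℂ ℂ)) ⊓
                (LinearMap.ker (LinearMap.mulLeft ℂ x - LinearMap.mulRight ℂ x)),
              w = u * v - v * u}) = b ⟨0, hm⟩ - 1 := by
  obtain rfl : b = fun i => Module.finrank ℂ (V i) := (funext hb).symm
  have hn : n ≠ 0 := by
    have := Finset.single_le_sum (f := fun i => Module.finrank ℂ (V i))
      (fun i _ => Nat.zero_le _) (Finset.mem_univ ⟨0, hm⟩)
    have := hpos ⟨0, hm⟩
    simp only at *
    omega
  have hf : IsNilpotent x.mulVecLin := hnil.map Matrix.toLinAlgEquiv'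
  obtain ⟨J⟩ := nonempty_stringBasis hf hV hinv hcyc
  have hJ := J.finrank_centralizerSubmodule hmono hm
  have hx : x.mulVecLin = Matrix.toLinAlgEquiv' x := rfl
  rw [hx, ← map_centralizerSubmodule, ← map_commutatorSpan] at hJ
  have hfr : ∀ S : Submodule ℂ (Matrix (Fin n) (Fin n) ℂ),
      Module.finrank ℂ (S.map (Matrix.toLinAlgEquiv' (R := ℂ) (n := Fin n)).toLinearMap) =
        Module.finrank ℂ S := fun S =>
    (Matrix.toLinAlgEquiv' (R := ℂ) (n := Fin n)).toLinearEquiv.finrank_map_eq S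
  rw [hfr, hfr] at hJ
  have htrace := finrank_ker_trace_inf_centralizerSubmodule hn x
  change finrank ℂ (LinearMap.ker (Matrix.traceLinearMap (Fin n) ℂ ℂ) ⊓
      centralizerSubmodule (K := ℂ) x : Submodule ℂ _) -
    finrank ℂ (commutatorSpan (LinearMap.ker (Matrix.traceLinearMap (Fin n) ℂ ℂ) ⊓
      centralizerSubmodule (K := ℂ) x)) = finrank ℂ (V ⟨0, hm⟩) - 1
  rw [commutatorSpan_ker_trace_inf hn x]
  omega
end

section
/- Let E = E_1 ⊕ … ⊕ E_m be a finite-dimensional complex vector space graded by nonzero subspaces, and let x be a nilpotent endomorphism of E such that each E_i is x-invariant and the restriction of x to each E_i is cyclic. Let 𝔥_x = {u ∈ End(E) : u∘x = x∘u} be the centralizer of x in gl(E). Fix indices i ≠ j, and let u ∈ End(E) commute with x, satisfy u(E_i) ⊆ E_j, and vanish on E_k for every k ≠ i. Then u belongs to the derived algebra [𝔥_x, 𝔥_x]. -/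
/-- Two linear maps that agree on each summand of an internal direct sum are equal. -/
theorem DirectSum.IsInternal.linearMap_ext {R ι M N : Type*} [DecidableEq ι] [Semiring R]
    [AddCommMonoid M] [Module R M] [AddCommMonoid N] [Module R N] {E : ι → Submodule R M}
    (hE : DirectSum.IsInternal E) {f g : M →ₗ[R] N} (h : ∀ k, ∀ v ∈ E k, f v = g v) : f = g := by
  ext v
  have hv : v ∈ ⨆ k, E k := by simp [hE.submodule_iSup_eq_top]
  induction hv using Submodule.iSup_induction' with
  | mem k v hv => exact h k v hv
  | zero => simp
  | add a b _ _ ha hb => simp [ha, hb]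

/-- The projection of an internal direct sum onto one of its summands. -/
theorem DirectSum.IsInternal.exists_projection {R ι M : Type*} [DecidableEq ι] [Semiring R]
    [AddCommMonoid M] [Module R M] {E : ι → Submodule R M} (hE : DirectSum.IsInternal E) (i : ι) :
    ∃ p : Module.End R M, (∀ v ∈ E i, p v = v) ∧ ∀ k ≠ i, ∀ v ∈ E k, p v = 0 := by
  let _ := hE.chooseDecomposition
  refine ⟨(E i).subtype ∘ₗ DirectSum.component R ι (fun k => E k) i ∘ₗ
    (DirectSum.decomposeLinearEquiv E).toLinearMap, fun v hv => ?_, fun k hk v hv => ?_⟩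
  · exact DirectSum.decompose_of_mem_same E hv
  · exact DirectSum.decompose_of_mem_ne E hv hk

/-- Let `E = E₁ ⊕ … ⊕ Eₘ` be a finite-dimensional complex vector space graded by nonzero
subspaces, and `x` a nilpotent endomorphism stabilizing each `Eᵢ` and cyclic on each `Eᵢ`.
If `u` commutes with `x`, maps `Eᵢ` into `Eⱼ` (with `i ≠ j`) and vanishes on every `Eₖ`
for `k ≠ i`, then `u` lies in the derived algebra of the centralizer `𝔥ₓ` of `x`. -/
theorem offDiagonal_commutant_mem_derived
    (V : Type*) [AddCommGroup V] [Module ℂ V] [FiniteDimensional ℂ V]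
    (m : ℕ) (E : Fin m → Submodule ℂ V) (hE : DirectSum.IsInternal E)
    (hne : ∀ i, E i ≠ ⊥)
    (x : Module.End ℂ V) (hnil : IsNilpotent x)
    (hinv : ∀ i, ∀ v ∈ E i, x v ∈ E i)
    (hcyc : ∀ i, IsCyclicEnd (x.restrict (hinv i)))
    (i j : Fin m) (hij : i ≠ j)
    (u : Module.End ℂ V) (hux : u * x = x * u)
    (humaps : ∀ v ∈ E i, u v ∈ E j)
    (huvanish : ∀ k : Fin m, k ≠ i → ∀ v ∈ E k, u v = 0) :
    u ∈ Submodule.span ℂ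
        {w : Module.End ℂ V |
          ∃ a ∈ LinearMap.ker (LinearMap.mulLeft ℂ x - LinearMap.mulRight ℂ x),
          ∃ c ∈ LinearMap.ker (LinearMap.mulLeft ℂ x - LinearMap.mulRight ℂ x),
            w = a * c - c * a} := by
  obtain ⟨p, hp, hp'⟩ := hE.exists_projection i
  have hpx : x * p = p * x := hE.linearMap_ext fun k v hv => by
    by_cases hk : k = i
    · subst hk
      simp [hp v hv, hp _ (hinv _ v hv)]
    · simp [hp' k hk v hv, hp' k hk _ (hinv k v hv)]
  have hup : u * p = u := hE.linearMap_ext fun k v hv => by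
    by_cases hk : k = i
    · subst hk
      simp [hp v hv]
    · simp [hp' k hk v hv, huvanish k hk v hv]
  have hpu : p * u = 0 := hE.linearMap_ext fun k v hv => by
    by_cases hk : k = i
    · subst hk
      simp [hp' j hij.symm _ (humaps v hv)]
    · simp [huvanish k hk v hv]
  refine Submodule.subset_span ⟨u, ?_, p, ?_, ?_⟩
  · simp [hux]
  · simp [hpx]
  · rw [hup, hpu, sub_zero]
end

section
/- Let V be a finite-dimensional complex vector space and let x ∈ End(V) admit an invariant-factor decomposition V = V_1 ⊕ … ⊕ V_m with minimal polynomials q_1, …, q_m of degrees b_1 ≥ … ≥ b_m ≥ 1, where q_{j+1} divides q_j. Then for each index i, the dimension of the kernel of q_i(x) equals ∑_{j=1}^{m} min(b_i, b_j). -/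
open Polynomial

theorem Polynomial.coe_aeval_restrict_apply {K V : Type*} [Field K] [AddCommGroup V] [Module K V]
    (x : Module.End K V) {W : Submodule K V} (hW : ∀ v ∈ W, x v ∈ W) (f : K[X]) (w : W) :
    (aeval (x.restrict hW) f w : V) = aeval x f w := by
  induction f using Polynomial.induction_on' with
  | add p q hp hq => simp [hp, hq]
  | monomial n a =>
    have hpow : ∀ n : ℕ, (((x.restrict hW) ^ n) w : V) = (x ^ n) w := by
      intro n
      induction n with
      | zero => simp
      | succ n ih => rw [pow_succ', pow_succ', Module.End.mul_apply, Module.End.mul_apply, ← ih]; rfl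
    simp [aeval_monomial, hpow]

theorem DirectSum.IsInternal.finrank_ker_aeval {K V ι : Type*} [Field K] [AddCommGroup V]
    [Module K V] [FiniteDimensional K V] [Fintype ι] [DecidableEq ι] {E : ι → Submodule K V}
    (hE : DirectSum.IsInternal E) (x : Module.End K V) (hinv : ∀ j, ∀ v ∈ E j, x v ∈ E j)
    (f : K[X]) :
    Module.finrank K (LinearMap.ker (aeval x f)) =
      ∑ j, Module.finrank K (LinearMap.ker (aeval (x.restrict (hinv j)) f)) := by
  have hcoe : ∀ d : DirectSum ι fun j => E j,
      DirectSum.coeAddMonoidHom E d = ∑ j, (d j : V) := by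
    classical
    intro d
    rw [DirectSum.coeAddMonoidHom_eq_dfinsuppSum]
    exact DFinsupp.sum_eq_sum_fintype d fun _ => rfl
  have hinj : ∀ w : ∀ j, E j, ∑ j, (w j : V) = 0 → w = 0 := by
    intro w hw
    have h0 : DFinsupp.equivFunOnFintype.symm w = (0 : DirectSum ι fun j => E j) :=
      hE.injective ((hcoe _).trans (hw.trans (map_zero _).symm))
    exact (Equiv.symm_apply_eq _).1 h0
  let F : (∀ j, LinearMap.ker (aeval (x.restrict (hinv j)) f)) →ₗ[K] V :=
    ∑ j, (E j).subtype ∘ₗ (Submodule.subtype _) ∘ₗ LinearMap.proj j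
  have hF : ∀ w, F w = ∑ j, ((w j : E j) : V) := by intro w; simp [F]
  have hFinj : Function.Injective F := by
    rw [injective_iff_map_eq_zero]
    intro w hw
    have := hinj (fun j => w j) (by rw [← hF, hw])
    ext j
    simpa using congrArg (fun g : ∀ j, E j => (g j : V)) this
  have hrange : LinearMap.range F = LinearMap.ker (aeval x f) := by
    apply le_antisymm
    · rintro _ ⟨w, rfl⟩
      rw [LinearMap.mem_ker, hF, map_sum]
      refine Finset.sum_eq_zero fun j _ => ?_
      rw [← coe_aeval_restrict_apply x (hinv j), LinearMap.mem_ker.1 (w j).2, Submodule.coe_zero]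
    · intro v hv
      obtain ⟨d, rfl⟩ := hE.surjective v
      rw [hcoe, LinearMap.mem_ker, map_sum] at hv
      have hd := hinj (fun j => aeval (x.restrict (hinv j)) f (d j))
        (by simpa only [coe_aeval_restrict_apply] using hv)
      exact ⟨fun j => ⟨d j, congrFun hd j⟩, by rw [hF, hcoe]⟩
  rw [← hrange, LinearMap.finrank_range_of_inj hFinj, Module.finrank_pi_fintype]

theorem IsCyclicEnd.finrank_ker_aeval_le {W : Type*} [AddCommGroup W] [Module ℂ W]
    [FiniteDimensional ℂ W] {u : Module.End ℂ W} (hu : IsCyclicEnd u) {f : ℂ[X]} (hf : f ≠ 0) :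
    Module.finrank ℂ (LinearMap.ker (aeval u f)) ≤ f.natDegree := by
  obtain ⟨e, he, -⟩ := hu
  set n := Module.finrank ℂ W
  have hzero : ∀ g : ℂ[X], g.natDegree < n → aeval u g e = 0 → g = 0 := by
    intro g hg h
    rw [aeval_eq_sum_range' hg, LinearMap.sum_apply, Finset.sum_range] at h
    have := Fintype.linearIndependent_iff.1 he (fun k => g.coeff k) (by simpa using h)
    ext k
    by_cases hk : k < n
    · simpa using this ⟨k, hk⟩
    · simpa using coeff_eq_zero_of_natDegree_lt (by omega)
  let G : degreeLT ℂ (n - f.natDegree) →ₗ[ℂ] LinearMap.range (aeval u f) :=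
    ((aeval u f).rangeRestrict ∘ₗ LinearMap.applyₗ e ∘ₗ (aeval u).toLinearMap) ∘ₗ
      Submodule.subtype _
  have hG : Function.Injective G := by
    rw [injective_iff_map_eq_zero]
    rintro ⟨g, hg⟩ h
    have h' : aeval u (f * g) e = 0 := by
      simpa [G, Subtype.ext_iff] using congrArg Subtype.val h
    by_contra hne
    have hg0 : g ≠ 0 := fun h0 => hne (Subtype.ext h0)
    rw [mem_degreeLT, ← natDegree_lt_iff_degree_lt hg0] at hg
    exact mul_ne_zero hf hg0 (hzero _ (by rw [natDegree_mul hf hg0]; omega) h')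
  have h1 := LinearMap.finrank_le_finrank_of_injective hG
  rw [(degreeLTEquiv ℂ _).finrank_eq, Module.finrank_fin_fun] at h1
  have h2 := LinearMap.finrank_range_add_finrank_ker (aeval u f)
  omega

theorem IsCyclicEnd.finrank_ker_aeval_of_dvd {W : Type*} [AddCommGroup W] [Module ℂ W]
    [FiniteDimensional ℂ W] {u : Module.End ℂ W} (hu : IsCyclicEnd u)
    (hdeg : (minpoly ℂ u).natDegree = Module.finrank ℂ W) {f : ℂ[X]} (hf : f ∣ minpoly ℂ u) :
    Module.finrank ℂ (LinearMap.ker (aeval u f)) = f.natDegree := by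
  obtain ⟨g, hg⟩ := hf
  have h0 : f * g ≠ 0 := hg ▸ minpoly.ne_zero (Algebra.IsIntegral.isIntegral u)
  have hf0 := left_ne_zero_of_mul h0
  have hg0 := right_ne_zero_of_mul h0
  have hle : LinearMap.range (aeval u g) ≤ LinearMap.ker (aeval u f) := by
    rintro _ ⟨w, rfl⟩
    rw [LinearMap.mem_ker, ← Module.End.mul_apply, ← map_mul, ← hg, minpoly.aeval,
      LinearMap.zero_apply]
  have h1 := Submodule.finrank_mono hle
  have h2 := LinearMap.finrank_range_add_finrank_ker (aeval u g)
  have h3 := hu.finrank_ker_aeval_le hf0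
  have h4 := hu.finrank_ker_aeval_le hg0
  rw [hg, natDegree_mul hf0 hg0] at hdeg
  omega

/-- Let `x ∈ End(V)` admit an invariant-factor decomposition `V = V₁ ⊕ … ⊕ Vₘ` with
minimal polynomials `q₁, …, qₘ` of degrees `b₁ ≥ … ≥ bₘ ≥ 1`, where `qⱼ₊₁ ∣ qⱼ`.
Then for each `i`, `dim ker qᵢ(x) = ∑ⱼ min(bᵢ, bⱼ)`. -/
theorem finrank_ker_aeval_invariant_factor
    (V : Type*) [AddCommGroup V] [Module ℂ V] [FiniteDimensional ℂ V]
    (x : Module.End ℂ V)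
    (m : ℕ) (E : Fin m → Submodule ℂ V) (hE : DirectSum.IsInternal E)
    (hne : ∀ j, E j ≠ ⊥)
    (hinv : ∀ j, ∀ v ∈ E j, x v ∈ E j)
    (hcyc : ∀ j, IsCyclicEnd (x.restrict (hinv j)))
    (q : Fin m → Polynomial ℂ) (hq : ∀ j, q j = minpoly ℂ (x.restrict (hinv j)))
    (b : Fin m → ℕ) (hbE : ∀ j, Module.finrank ℂ (E j) = b j)
    (hdeg : ∀ j, (q j).natDegree = b j)
    (hmono : ∀ j k : Fin m, j ≤ k → b k ≤ b j) (hpos : ∀ j, 1 ≤ b j)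
    (hdvd : ∀ (j : ℕ) (h : j + 1 < m), q ⟨j + 1, h⟩ ∣ q ⟨j, Nat.lt_of_succ_lt h⟩) :
    ∀ i : Fin m,
      Module.finrank ℂ (LinearMap.ker (Polynomial.aeval x (q i))) =
        ∑ j : Fin m, min (b i) (b j) := by
  have hdvd' : ∀ j k : Fin m, j ≤ k → q k ∣ q j := by
    rintro ⟨j, hj⟩ ⟨k, hk⟩ hjk
    replace hjk : j ≤ k := hjk
    induction k, hjk using Nat.le_induction with
    | base => exact dvd_rfl
    | succ k _ ih => exact (hdvd k hk).trans (ih (Nat.lt_of_succ_lt hk))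
  intro i
  rw [hE.finrank_ker_aeval x hinv]
  refine Finset.sum_congr rfl fun j _ => ?_
  rcases le_total i j with hij | hij
  · have hz : Polynomial.aeval (x.restrict (hinv j)) (q i) = 0 :=
      (minpoly.dvd_iff).1 (hq j ▸ hdvd' i j hij)
    rw [hz, LinearMap.ker_zero, finrank_top, hbE, min_eq_right (hmono i j hij)]
  · rw [(hcyc j).finrank_ker_aeval_of_dvd (by rw [← hq, hdeg, hbE]) (hq j ▸ hdvd' j i hij), hdeg,
      min_eq_left (hmono j i hij)]
end
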